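/- Let P be a finite graded simplicial poset of rank n ≥ 2 with h-vector (h_0, …, h_n), let P̂ be P with a top element adjoined, and let P̂* be the dual poset of P̂. Then the γ-polynomials of the Chow and augmented Chow polynomials satisfy: γ(H_{P̂}; x) = Σ_{k=0}^n h_k · p_{n,k}^{∅⊆[1,n−1]}(x), γ(H_{P̂*}; x) = Σ_{k=0}^n h_k · p_{n,k}^{∅⊆[2,n]}(x), and γ(H^aug_{P̂}; x) = γ(H^aug_{P̂*}; x) = Σ_{k=0}^n h_k · p_{n,k}^{∅⊆[1,n]}(x). -/

import Mathlib

open Polynomial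

noncomputable section

/-- A real polynomial is *real-rooted* if all of its complex roots are real.
(The zero polynomial is real-rooted by convention.) -/
def RealRooted (f : Polynomial ℝ) : Prop :=
  ∀ z ∈ (f.map (algebraMap ℝ ℂ)).roots, z.im = 0

/-- All coefficients of the polynomial are nonnegative. -/
def NonnegCoeffs (f : Polynomial ℝ) : Prop := ∀ i, 0 ≤ f.coeff i

/-- The list of real roots of `f`, with multiplicity, in weakly decreasing order. -/
def descRoots (f : Polynomial ℝ) : List ℝ := (f.roots.sort (· ≤ ·)).reverse

/-- The interlacing condition on the weakly decreasing root sequences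
`α` of `f` and `β` of `g` : `β₁ ≥ α₁ ≥ β₂ ≥ α₂ ≥ …`, together with the
degree condition `deg g ∈ {deg f, deg f + 1}`. -/
def InterlacesAux (f g : Polynomial ℝ) : Prop :=
  (g.natDegree = f.natDegree ∨ g.natDegree = f.natDegree + 1) ∧
  (∀ (i : ℕ) (hf : i < (descRoots f).length) (hg : i < (descRoots g).length),
      (descRoots f).get ⟨i, hf⟩ ≤ (descRoots g).get ⟨i, hg⟩) ∧
  (∀ (i : ℕ) (hf : i < (descRoots f).length) (hg : i + 1 < (descRoots g).length),
      (descRoots g).get ⟨i + 1, hg⟩ ≤ (descRoots f).get ⟨i, hf⟩)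

/-- `f ⪯ g` : `f` interlaces `g`.  Both polynomials are required to be real-rooted;
by convention `0 ⪯ 0`, `0 ⪯ f`, `f ⪯ 0`, and any two polynomials of degree at most 1
interlace. -/
def Interlaces (f g : Polynomial ℝ) : Prop :=
  RealRooted f ∧ RealRooted g ∧
  (f = 0 ∨ g = 0 ∨ (f.natDegree ≤ 1 ∧ g.natDegree ≤ 1) ∨ InterlacesAux f g)

/-- A finite family of real-rooted polynomials is an interlacing sequence if
`F i ⪯ F j` for all `i < j`. -/
def InterlacingSeq {n : ℕ} (F : Fin n → Polynomial ℝ) : Prop :=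
  ∀ i j : Fin n, i < j → Interlaces (F i) (F j)

/-- A polynomial of degree `d` is palindromic if `coeff i = coeff (d - i)` for all `i ≤ d`. -/
def Palindromic (f : Polynomial ℝ) : Prop :=
  ∀ i ≤ f.natDegree, f.coeff i = f.coeff (f.natDegree - i)

/-- A set `S ⊆ ℕ` is isolated if `i ∈ S` implies `i + 1 ∉ S`. -/
def IsolatedSet (S : Finset ℕ) : Prop := ∀ i ∈ S, i + 1 ∉ S

instance : DecidablePred IsolatedSet := fun S =>
  decidable_of_iff (∀ i ∈ S, i + 1 ∉ S) Iff.rfl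

/-- The descent set of a permutation `w` of `{1, …, n+1}` (encoded as a permutation of
`Fin (n+1)`), as a subset of `{1, …, n}` : `Des(w) = {i ∈ {1,…,n} : w(i) > w(i+1)}`. -/
def desSet {n : ℕ} (w : Equiv.Perm (Fin (n + 1))) : Finset ℕ :=
  (Finset.univ.filter (fun i : Fin n => w i.succ < w i.castSucc)).image
    (fun i => i.val + 1)

/-- The polynomial `p_{n,k}^{S ⊆ T}(x) = Σ x^{des(w)}`, the sum over all permutations `w`
of `{1, …, n+1}` with `w(1) = k + 1`, `Des(w)` isolated and `S ⊆ Des(w) ⊆ T`. -/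
def pPoly (n k : ℕ) (S T : Finset ℕ) : Polynomial ℝ :=
  ∑ w ∈ Finset.univ.filter (fun w : Equiv.Perm (Fin (n + 1)) =>
      (w 0 : ℕ) = k ∧ IsolatedSet (desSet w) ∧ S ⊆ desSet w ∧ desSet w ⊆ T),
    Polynomial.X ^ (desSet w).card

/-- The shifted set `S - 1 = {i - 1 : i ∈ S} ∩ {1, …, n-1}`. -/
def shiftDown (n : ℕ) (S : Finset ℕ) : Finset ℕ :=
  (S.image (fun i => i - 1)) ∩ Finset.Icc 1 (n - 1)

section Poset

variable (P : Type*) [Fintype P] [PartialOrder P] [OrderBot P]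

/-- A finite poset `P` with a minimum is simplicial of rank `n` if for every maximal
element `m` the interval `[⊥, m]` is order-isomorphic to the boolean lattice of
subsets of an `n`-element set. -/
def SimplicialOfRank (n : ℕ) : Prop :=
  ∀ m : P, IsMax m → Nonempty ((Set.Icc (⊥ : P) m) ≃o Finset (Fin n))

variable {P}

/-- `rk` is a rank function: `rk ⊥ = 0` and ranks increase by one along covers. -/
def IsRankFunction (rk : P → ℕ) : Prop :=
  rk ⊥ = 0 ∧ ∀ a b : P, a ⋖ b → rk b = rk a + 1

/-- `f_{i-1}` : the number of elements of `P` of rank `i`. -/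
def fvec (rk : P → ℕ) (i : ℕ) : ℕ := (Finset.univ.filter (fun x => rk x = i)).card

/-- The generating polynomial `Σ_{i=0}^n h_i x^i = Σ_{i=0}^n f_{i-1} x^i (1-x)^{n-i}`
of the h-vector of `P`. -/
def hPoly (rk : P → ℕ) (n : ℕ) : Polynomial ℤ :=
  ∑ i ∈ Finset.range (n + 1),
    Polynomial.C (fvec rk i : ℤ) * Polynomial.X ^ i * (1 - Polynomial.X) ^ (n - i)

/-- The h-vector entry `h_k` of `P`. -/
def hvec (rk : P → ℕ) (n k : ℕ) : ℤ := (hPoly rk n).coeff k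

/-- The flag f-vector `α_{P̂}(T)` : the number of chains in `P̂ ∖ {0̂, 1̂} = P ∖ {⊥}`
whose set of ranks is exactly `T`. -/
def flagF (rk : P → ℕ) (T : Finset ℕ) : ℕ :=
  Nat.card {c : Finset P // IsChain (· ≤ ·) (c : Set P) ∧ (⊥ : P) ∉ c ∧ c.image rk = T}

/-- The flag h-vector `β_{P̂}(S) = Σ_{T ⊆ S} (-1)^{|S ∖ T|} α_{P̂}(T)`. -/
def flagH (rk : P → ℕ) (S : Finset ℕ) : ℤ :=
  ∑ T ∈ S.powerset, (-1) ^ ((S \ T).card) * (flagF rk T : ℤ)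

/-- The flag h-vector of the dual poset `P̂*` : `β_{P̂*}(S) = β_{P̂}({n+1-s : s ∈ S})`. -/
def flagHDual (rk : P → ℕ) (n : ℕ) (S : Finset ℕ) : ℤ :=
  flagH rk (S.image (fun s => n + 1 - s))

/-- The Chow polynomial
`H_{P̂}(x) = Σ_{S ⊆ {2,…,n} isolated} β_{P̂}(S) x^{|S|} (1+x)^{n-2|S|}`. -/
def chowPoly (rk : P → ℕ) (n : ℕ) : Polynomial ℝ :=
  ∑ S ∈ (Finset.Icc 2 n).powerset.filter IsolatedSet,
    (flagH rk S : ℝ) • (Polynomial.X ^ S.card * (1 + Polynomial.X) ^ (n - 2 * S.card))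

/-- The augmented Chow polynomial
`H^aug_{P̂}(x) = Σ_{S ⊆ {1,…,n} isolated} β_{P̂}(S) x^{|S|} (1+x)^{n+1-2|S|}`. -/
def chowAugPoly (rk : P → ℕ) (n : ℕ) : Polynomial ℝ :=
  ∑ S ∈ (Finset.Icc 1 n).powerset.filter IsolatedSet,
    (flagH rk S : ℝ) • (Polynomial.X ^ S.card * (1 + Polynomial.X) ^ (n + 1 - 2 * S.card))

/-- The Chow polynomial of the dual poset `P̂*`. -/
def chowDualPoly (rk : P → ℕ) (n : ℕ) : Polynomial ℝ :=
  ∑ S ∈ (Finset.Icc 2 n).powerset.filter IsolatedSet,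
    (flagHDual rk n S : ℝ) • (Polynomial.X ^ S.card * (1 + Polynomial.X) ^ (n - 2 * S.card))

/-- The augmented Chow polynomial of the dual poset `P̂*`. -/
def chowAugDualPoly (rk : P → ℕ) (n : ℕ) : Polynomial ℝ :=
  ∑ S ∈ (Finset.Icc 1 n).powerset.filter IsolatedSet,
    (flagHDual rk n S : ℝ) • (Polynomial.X ^ S.card * (1 + Polynomial.X) ^ (n + 1 - 2 * S.card))

end Poset

end

/-!
In a simplicial poset the chains below an element of rank `t` are counted as in the boolean lattice
of rank `t`, so the number of chains with rank set `T`, `t = max T`, is `f_{t-1}` times a constant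
depending only on `T`. That constant is also found in a boolean lattice: a permutation `w` of
`{1, …, n + 1}` is encoded by the chain formed by its sets of last `t` values, `t ∈ T`, as soon as
`{n + 1 - d : d ∈ Des(w)} ⊆ T`, and `w(1)` is the least element missing from the largest member of
the chain. Prescribing `w(1) = k + 1` leaves `(n - k).choose (n - t)` choices for that member, and
the same binomial coefficients express the `f`-vector through the `h`-vector. Möbius inversion over
`T ⊆ S` therefore gives

  `β_{P̂}(S) = Σ_k h_k · #{w : w(1) = k + 1, Des(w) = {n + 1 - s : s ∈ S}}`.

The defining sums of the Chow polynomials are already `γ`-expansions, with coefficients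
`Σ_{|S| = i} β(S)`, and such expansions are unique.
-/

section Polynomials

variable {R : Type*}

theorem eq_zero_of_sum_C_mul_X_pow_mul_eq_zero [Semiring R] {q : ℕ → R[X]}
    (hq : ∀ i, (q i).coeff 0 = 1) {N : ℕ} {c : ℕ → R}
    (h : ∑ i ∈ Finset.range N, C (c i) * X ^ i * q i = 0) {i : ℕ} (hi : i < N) : c i = 0 := by
  induction i using Nat.strong_induction_on with
  | _ i ih =>
    have hcoeff := congrArg (coeff · i) h
    simp only [finsetSum_coeff, coeff_zero, mul_assoc, coeff_C_mul, coeff_X_pow_mul'] at hcoeff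
    rw [Finset.sum_eq_single_of_mem i (Finset.mem_range.2 hi)] at hcoeff
    · simpa [hq] using hcoeff
    · intro j hj hji
      rcases lt_or_gt_of_ne hji with hlt | hgt
      · rw [ih j hlt (Finset.mem_range.1 hj), zero_mul]
      · rw [if_neg hgt.not_ge, mul_zero]

theorem sum_smul_X_pow_mul_eq_sum_range [Semiring R] {ι : Type*} {s : Finset ι} {e : ι → ℕ} {N : ℕ}
    (he : ∀ j ∈ s, e j ∈ Finset.range N) (b : ι → R) (q : ℕ → R[X]) :
    ∑ j ∈ s, b j • (X ^ e j * q (e j)) =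
      ∑ i ∈ Finset.range N, C (∑ j ∈ s with e j = i, b j) * X ^ i * q i := by
  rw [← Finset.sum_fiberwise_of_maps_to he]
  refine Finset.sum_congr rfl fun i _ => ?_
  rw [map_sum, Finset.sum_mul, Finset.sum_mul]
  refine Finset.sum_congr rfl fun j hj => ?_
  rw [(Finset.mem_filter.1 hj).2, smul_eq_C_mul, mul_assoc]

theorem sum_C_mul_X_pow_eq_sum_smul_X_pow [Ring R] {ι : Type*} {s : Finset ι} {e : ι → ℕ} {N : ℕ}
    (he : ∀ j ∈ s, e j ∈ Finset.range N) {q : ℕ → R[X]} (hq : ∀ i, (q i).coeff 0 = 1)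
    {b : ι → R} {γ : ℕ → R}
    (h : ∑ j ∈ s, b j • (X ^ e j * q (e j)) =
      ∑ i ∈ Finset.range N, C (γ i) * X ^ i * q i) :
    ∑ i ∈ Finset.range N, C (γ i) * X ^ i = ∑ j ∈ s, b j • X ^ e j := by
  have hγ : ∀ i ∈ Finset.range N, γ i = ∑ j ∈ s with e j = i, b j := by
    intro i hi
    refine sub_eq_zero.1 (eq_zero_of_sum_C_mul_X_pow_mul_eq_zero hq
      (c := fun i => γ i - ∑ j ∈ s with e j = i, b j) ?_ (Finset.mem_range.1 hi))
    simp only [C_sub, sub_mul, Finset.sum_sub_distrib]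
    rw [← h, sum_smul_X_pow_mul_eq_sum_range he, sub_self]
  have hconst := sum_smul_X_pow_mul_eq_sum_range he b fun _ => 1
  simp only [mul_one] at hconst
  rw [hconst]
  exact Finset.sum_congr rfl fun i hi => by rw [hγ i hi]

theorem homogenize_X_pow_mul_one_sub_X_pow [CommRing R] {i n : ℕ} (hi : i ≤ n) :
    homogenize ((X : R[X]) ^ i * (1 - X) ^ (n - i)) n =
      MvPolynomial.X 0 ^ i * (MvPolynomial.X 1 - MvPolynomial.X 0) ^ (n - i) := by
  refine homogenize_eq_of_isHomogeneous ?_ (by simp)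
  have hX (j : Fin 2) : (MvPolynomial.X j : MvPolynomial (Fin 2) R).IsHomogeneous 1 :=
    MvPolynomial.isHomogeneous_X R j
  simpa [hi] using ((hX 0).pow i).mul (((hX 1).sub (hX 0)).pow (n - i))

theorem eq_sum_mul_choose_of_sum_eq [CommRing R] {n : ℕ} {f h : ℕ → R}
    (hfh : ∑ k ∈ Finset.range (n + 1), C (h k) * X ^ k =
      ∑ i ∈ Finset.range (n + 1), C (f i) * X ^ i * (1 - X) ^ (n - i))
    {t : ℕ} (ht : t ≤ n) :
    f t = ∑ k ∈ Finset.range (n + 1), h k * ((n - k).choose (n - t) : R) := by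
  -- Homogenize to degree `n` and substitute `(1, 1 + X)`, so that `1 - X` becomes `X`.
  have hreverse : ∑ k ∈ Finset.range (n + 1), C (h k) * (1 + X) ^ (n - k) =
      ∑ i ∈ Finset.range (n + 1), C (f i) * X ^ (n - i) := by
    have hsubst := congrArg
      (fun p => MvPolynomial.aeval (R := R) ![(1 : R[X]), 1 + X] (homogenize p n)) hfh
    simp only [homogenize_finsetSum, mul_assoc, homogenize_C_mul, map_sum] at hsubst
    convert hsubst using 2 with k hk i hi
    · have hkn := Finset.mem_range_succ_iff.1 hk
      simp [homogenize_X_pow hkn]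
    · have hin := Finset.mem_range_succ_iff.1 hi
      simp [homogenize_X_pow_mul_one_sub_X_pow hin]
  have hcoeff := congrArg (coeff · (n - t)) hreverse
  simp only [finsetSum_coeff, coeff_C_mul, coeff_one_add_X_pow, coeff_X_pow] at hcoeff
  rw [hcoeff, Finset.sum_eq_single_of_mem t (Finset.mem_range_succ_iff.2 ht)]
  · simp
  · intro i hi hit
    rw [if_neg (by have := Finset.mem_range.1 hi; omega), mul_zero]

end Polynomials

section FlagNumbers

variable {P : Type*} [Fintype P]

theorem natDegree_hPoly_le (rk : P → ℕ) (n : ℕ) : (hPoly rk n).natDegree ≤ n := by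
  refine natDegree_sum_le_of_forall_le _ _ fun i hi => ?_
  have hin := Finset.mem_range_succ_iff.1 hi
  compute_degree
  omega

theorem fvec_eq_sum_hvec_mul_choose (rk : P → ℕ) {n t : ℕ} (ht : t ≤ n) :
    (fvec rk t : ℤ) =
      ∑ k ∈ Finset.range (n + 1), hvec rk n k * ((n - k).choose (n - t) : ℤ) := by
  refine eq_sum_mul_choose_of_sum_eq (f := fun i => (fvec rk i : ℤ)) ?_ ht
  simp only [hvec, C_mul_X_pow_eq_monomial,
    ← as_sum_range' _ _ (Nat.lt_succ_of_le (natDegree_hPoly_le rk n))]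
  simp only [hPoly, C_mul_X_pow_eq_monomial]

end FlagNumbers

section SubsetsOfNat

theorem IsolatedSet.two_mul_card_le {a b : ℕ} {S : Finset ℕ} (hS : IsolatedSet S)
    (hSab : S ⊆ Finset.Icc a b) : 2 * S.card ≤ b + 2 - a := by
  have hdisj : Disjoint S (S.map (addRightEmbedding 1)) := by
    rw [Finset.disjoint_right, Finset.forall_mem_map]
    exact hS
  have hsub : S ∪ S.map (addRightEmbedding 1) ⊆ Finset.Icc a (b + 1) := by
    intro x hx
    simp only [Finset.mem_union, Finset.mem_map, addRightEmbedding_apply] at hx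
    obtain hx | ⟨y, hy, rfl⟩ := hx
    · exact Finset.Icc_subset_Icc_right b.le_succ (hSab hx)
    · have := Finset.mem_Icc.1 (hSab hy)
      rw [Finset.mem_Icc]
      omega
  have hcard := Finset.card_le_card hsub
  rw [Finset.card_union_of_disjoint hdisj, Finset.card_map, Nat.card_Icc] at hcard
  omega

theorem sum_C_mul_X_pow_eq_sum_isolatedSet {a n d : ℕ} (had : n + 2 - a ≤ d) {b : Finset ℕ → ℝ}
    {γ : ℕ → ℝ}
    (h : ∑ S ∈ (Finset.Icc a n).powerset.filter IsolatedSet,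
        b S • (X ^ S.card * (1 + X) ^ (d - 2 * S.card)) =
      ∑ i ∈ Finset.range (d / 2 + 1), C (γ i) * X ^ i * (1 + X) ^ (d - 2 * i)) :
    ∑ i ∈ Finset.range (d / 2 + 1), C (γ i) * X ^ i =
      ∑ S ∈ (Finset.Icc a n).powerset.filter IsolatedSet, b S • X ^ S.card := by
  refine sum_C_mul_X_pow_eq_sum_smul_X_pow (q := fun i => (1 + X) ^ (d - 2 * i))
    (fun S hS => ?_) (fun i => by simp [coeff_zero_eq_eval_zero]) h
  rw [Finset.mem_filter, Finset.mem_powerset] at hS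
  have := hS.2.two_mul_card_le hS.1
  rw [Finset.mem_range]
  omega

/-- The image of `S` under the reversal `s ↦ n + 1 - s` of `{1, …, n}`. -/
def revSet (n : ℕ) (S : Finset ℕ) : Finset ℕ := S.image fun s => n + 1 - s

variable {n : ℕ} {S : Finset ℕ}

theorem mem_revSet (hS : S ⊆ Finset.Icc 1 n) {i : ℕ} :
    i ∈ revSet n S ↔ i ∈ Finset.Icc 1 n ∧ n + 1 - i ∈ S := by
  simp only [revSet, Finset.mem_image, Finset.mem_Icc]
  constructor
  · rintro ⟨s, hs, rfl⟩
    have := Finset.mem_Icc.1 (hS hs)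
    rw [Nat.sub_sub_self (by omega)]
    exact ⟨by omega, hs⟩
  · rintro ⟨hi, his⟩
    exact ⟨_, his, by omega⟩

theorem revSet_subset_Icc (hS : S ⊆ Finset.Icc 1 n) : revSet n S ⊆ Finset.Icc 1 n :=
  fun _ hi => ((mem_revSet hS).1 hi).1

theorem revSet_revSet (hS : S ⊆ Finset.Icc 1 n) : revSet n (revSet n S) = S := by
  rw [revSet, revSet, Finset.image_image]
  refine (Finset.image_congr fun s hs => ?_).trans Finset.image_id
  have := Finset.mem_Icc.1 (hS hs)
  simp only [Function.comp_apply, id]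
  omega

theorem card_revSet (hS : S ⊆ Finset.Icc 1 n) : (revSet n S).card = S.card := by
  refine le_antisymm Finset.card_image_le ?_
  conv_lhs => rw [← revSet_revSet hS]
  exact Finset.card_image_le

theorem revSet_subset_revSet {T : Finset ℕ} (h : S ⊆ T) : revSet n S ⊆ revSet n T :=
  Finset.image_subset_image h

theorem revSet_Icc {a b : ℕ} (ha : 1 ≤ a) (hb : b ≤ n) :
    revSet n (Finset.Icc a b) = Finset.Icc (n + 1 - b) (n + 1 - a) := by
  ext i
  rw [mem_revSet (Finset.Icc_subset_Icc ha hb)]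
  simp only [Finset.mem_Icc]
  omega

theorem IsolatedSet.revSet (hS : S ⊆ Finset.Icc 1 n) (h : IsolatedSet S) :
    IsolatedSet (revSet n S) := by
  intro i hi hi'
  rw [mem_revSet hS, Finset.mem_Icc] at hi hi'
  refine h _ hi'.2 ?_
  rw [show n + 1 - (i + 1) + 1 = n + 1 - i by omega]
  exact hi.2

theorem sum_isolatedSet_revSet {M : Type*} [AddCommMonoid M] {I : Finset ℕ}
    (hI : I ⊆ Finset.Icc 1 n) (g : Finset ℕ → M) :
    ∑ S ∈ (revSet n I).powerset.filter IsolatedSet, g (revSet n S) =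
      ∑ S ∈ I.powerset.filter IsolatedSet, g S := by
  have hmaps : ∀ {J : Finset ℕ}, J ⊆ Finset.Icc 1 n →
      ∀ S ∈ J.powerset.filter IsolatedSet,
        revSet n S ∈ (revSet n J).powerset.filter IsolatedSet := by
    intro J hJ S hS
    rw [Finset.mem_filter, Finset.mem_powerset] at hS ⊢
    exact ⟨revSet_subset_revSet hS.1, hS.2.revSet (hS.1.trans hJ)⟩
  have hinv : ∀ {J : Finset ℕ}, J ⊆ Finset.Icc 1 n →
      ∀ S ∈ J.powerset.filter IsolatedSet, revSet n (revSet n S) = S := by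
    intro J hJ S hS
    rw [Finset.mem_filter, Finset.mem_powerset] at hS
    exact revSet_revSet (hS.1.trans hJ)
  have hI' := revSet_subset_Icc hI
  refine Finset.sum_nbij' (revSet n) (revSet n) ?_ (hmaps hI) (hinv hI') (hinv hI)
    fun _ _ => rfl
  simpa only [revSet_revSet hI] using hmaps hI'

theorem sum_Icc_neg_one_pow_card_sdiff {α : Type*} [DecidableEq α] {S U : Finset α} (hU : U ⊆ S) :
    ∑ T ∈ Finset.Icc U S, (-1 : ℤ) ^ (S \ T).card = if U = S then 1 else 0 := by
  have hSU : S \ U = ∅ ↔ U = S :=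
    Finset.sdiff_eq_empty_iff_subset.trans ⟨hU.antisymm, fun h => h.ge⟩
  rw [← if_congr hSU rfl rfl, ← Finset.sum_powerset_neg_one_pow_card]
  refine Finset.sum_nbij' (S \ ·) (S \ ·) (fun T hT => ?_) (fun V hV => ?_) (fun T hT => ?_)
    (fun V hV => ?_) fun _ _ => rfl
  · exact Finset.mem_powerset.2 (Finset.sdiff_subset_sdiff le_rfl (Finset.mem_Icc.1 hT).1)
  · rw [Finset.mem_powerset, Finset.subset_sdiff] at hV
    exact Finset.mem_Icc.2 ⟨Finset.subset_sdiff.2 ⟨hU, hV.2.symm⟩, Finset.sdiff_subset⟩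
  · exact Finset.sdiff_sdiff_eq_self (Finset.mem_Icc.1 hT).2
  · exact Finset.sdiff_sdiff_eq_self ((Finset.mem_powerset.1 hV).trans Finset.sdiff_subset)

theorem sum_powerset_neg_one_pow_card_sdiff {α : Type*} [DecidableEq α] {f g : Finset α → ℤ}
    {S : Finset α} (h : ∀ T ⊆ S, f T = ∑ U ∈ T.powerset, g U) :
    ∑ T ∈ S.powerset, (-1) ^ (S \ T).card * f T = g S := by
  calc ∑ T ∈ S.powerset, (-1) ^ (S \ T).card * f T
      = ∑ T ∈ S.powerset, ∑ U ∈ T.powerset, (-1) ^ (S \ T).card * g U :=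
        Finset.sum_congr rfl fun T hT => by rw [h T (Finset.mem_powerset.1 hT), Finset.mul_sum]
    _ = ∑ U ∈ S.powerset, ∑ T ∈ Finset.Icc U S, (-1) ^ (S \ T).card * g U := by
        refine Finset.sum_comm' fun T U => ?_
        simp only [Finset.mem_powerset, Finset.mem_Icc]
        exact ⟨fun ⟨hT, hU⟩ => ⟨⟨hU, hT⟩, hU.trans hT⟩, fun ⟨⟨hU, hT⟩, _⟩ => ⟨hT, hU⟩⟩
    _ = g S := by
        rw [Finset.sum_congr rfl fun U hU => by rw [← Finset.sum_mul,
          sum_Icc_neg_one_pow_card_sdiff (Finset.mem_powerset.1 hU)]]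
        simp

end SubsetsOfNat

section LocallyBoolean

/-- Every principal lower set `{y | y ≤ x}` is a boolean lattice, of rank `ρ x`. For a poset with a
minimum these are the simplicial posets of Stanley, with `ρ` their rank function; the maximal
elements may have different ranks. -/
def IsLocallyBoolean {Q : Type*} [PartialOrder Q] (ρ : Q → ℕ) : Prop :=
  ∀ x, Nonempty (Set.Iic x ≃o Finset (Fin (ρ x)))

theorem nonempty_orderIso_Iic_of_isLowerSet_range {A Q : Type*} [PartialOrder A] [PartialOrder Q]
    (φ : A ↪o Q) (hφ : IsLowerSet (Set.range φ)) (a : A) :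
    Nonempty (Set.Iic a ≃o Set.Iic (φ a)) := by
  have hrange : Set.range ((OrderEmbedding.subtype (Set.Iic a)).trans φ) = Set.Iic (φ a) := by
    ext y
    constructor
    · rintro ⟨b, rfl⟩
      exact φ.le_iff_le.2 b.2
    · intro hy
      obtain ⟨b, rfl⟩ := hφ hy ⟨a, rfl⟩
      exact ⟨⟨b, φ.le_iff_le.1 hy⟩, rfl⟩
  exact ⟨OrderEmbedding.orderIso.trans (OrderIso.setCongr _ _ hrange)⟩

theorem exists_orderEmbedding_range_eq {A Q : Type*} [PartialOrder A] [PartialOrder Q]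
    {s : Set Q} (e : s ≃o A) : ∃ φ : A ↪o Q, Set.range φ = s :=
  ⟨e.symm.toOrderEmbedding.trans (OrderEmbedding.subtype s), by
    rw [RelEmbedding.coe_trans, Set.range_comp]
    exact (congrArg _ e.symm.range_eq).trans (Set.image_univ.trans Subtype.range_coe)⟩

theorem isLocallyBoolean_card (α : Type*) : IsLocallyBoolean (Finset.card : Finset α → ℕ) := by
  intro s
  let ι : Fin s.card ↪ α := s.equivFin.symm.toEmbedding.trans (Function.Embedding.subtype _)
  have hι : Finset.univ.map ι = s := by
    rw [← Finset.map_map, Finset.map_univ_equiv, Finset.univ_eq_attach, Finset.attach_map_val]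
  have hlower : IsLowerSet (Set.range (Finset.mapEmbedding ι)) := by
    rintro _ t ht ⟨u, rfl⟩
    obtain ⟨v, -, rfl⟩ := Finset.subset_map_iff.1 ht
    exact ⟨v, rfl⟩
  obtain ⟨e⟩ := nonempty_orderIso_Iic_of_isLowerSet_range _ hlower Finset.univ
  rw [Finset.mapEmbedding_apply, hι] at e
  exact ⟨e.symm.trans OrderIso.IicTop⟩

theorem IsRankFunction.apply_orderEmbedding {α P : Type*} [PartialOrder P] [OrderBot P]
    {rk : P → ℕ} (hrk : IsRankFunction rk) {φ : Finset α ↪o P}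
    (hφ : IsLowerSet (Set.range φ)) (s : Finset α) : rk (φ s) = s.card := by
  classical
  induction s using Finset.induction_on with
  | empty =>
    obtain ⟨s, hs⟩ := hφ bot_le ⟨∅, rfl⟩
    have hbot : φ ∅ = ⊥ := le_bot_iff.1 (hs ▸ φ.monotone (Finset.empty_subset s))
    rw [hbot, hrk.1, Finset.card_empty]
  | insert a s ha ih =>
    rw [hrk.2 _ _ ((Finset.covBy_insert ha).image φ hφ.ordConnected), ih,
      Finset.card_insert_of_notMem ha]

theorem SimplicialOfRank.isLocallyBoolean {P : Type*} [Finite P] [PartialOrder P] [OrderBot P]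
    {n : ℕ} (hP : SimplicialOfRank P n) {rk : P → ℕ} (hrk : IsRankFunction rk) :
    IsLocallyBoolean rk := by
  intro x
  obtain ⟨m, hxm, hm⟩ := Finite.exists_le_maximal (p := fun _ : P => True) (a := x) trivial
  obtain ⟨φ, hφ⟩ := exists_orderEmbedding_range_eq (hP m (maximal_true.1 hm)).some
  rw [Set.Icc_bot] at hφ
  have hlower : IsLowerSet (Set.range φ) := hφ ▸ isLowerSet_Iic m
  obtain ⟨s, rfl⟩ : x ∈ Set.range φ := hφ ▸ hxm
  rw [hrk.apply_orderEmbedding hlower]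
  obtain ⟨e⟩ := nonempty_orderIso_Iic_of_isLowerSet_range φ hlower s
  exact (isLocallyBoolean_card _ s).map e.symm.trans

namespace IsLocallyBoolean

variable {Q : Type*} [PartialOrder Q] {ρ : Q → ℕ}

theorem card_Iic (h : IsLocallyBoolean ρ) (x : Q) : Nat.card (Set.Iic x) = 2 ^ ρ x := by
  rw [Nat.card_congr (h x).some.toEquiv]
  simp

theorem exists_orderEmbedding (h : IsLocallyBoolean ρ) (x : Q) :
    ∃ φ : Finset (Fin (ρ x)) ↪o Q,
      Set.range φ = Set.Iic x ∧ φ Finset.univ = x ∧ ∀ s, ρ (φ s) = s.card := by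
  obtain ⟨φ, hφ⟩ := exists_orderEmbedding_range_eq (h x).some
  have htop : φ Finset.univ = x := by
    obtain ⟨t, ht⟩ : x ∈ Set.range φ := hφ ▸ le_rfl
    exact le_antisymm (hφ ▸ ⟨_, rfl⟩ : φ Finset.univ ∈ Set.Iic x)
      (ht.symm.trans_le (φ.monotone (Finset.subset_univ t)))
  refine ⟨φ, hφ, htop, fun s => Nat.pow_right_injective le_rfl ?_⟩
  obtain ⟨e⟩ := nonempty_orderIso_Iic_of_isLowerSet_range φ (hφ ▸ isLowerSet_Iic x) s
  change 2 ^ ρ (φ s) = 2 ^ s.card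
  rw [← h.card_Iic, ← Nat.card_congr e.toEquiv, (isLocallyBoolean_card _).card_Iic]

theorem strictMono (h : IsLocallyBoolean ρ) : StrictMono ρ := by
  intro y x hyx
  obtain ⟨φ, hφ, htop, hρ⟩ := h.exists_orderEmbedding x
  obtain ⟨s, rfl⟩ : y ∈ Set.range φ := hφ ▸ hyx.le
  rw [hρ]
  exact (Finset.card_lt_card (φ.lt_iff_lt.1 (hyx.trans_eq htop.symm))).trans_eq (Finset.card_fin _)

theorem apply_eq_zero_iff [OrderBot Q] (h : IsLocallyBoolean ρ) {x : Q} : ρ x = 0 ↔ x = ⊥ := by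
  have hbot : ρ ⊥ = 0 := by simpa [eq_comm (a := 1)] using h.card_Iic ⊥
  refine ⟨fun hx => ?_, fun hx => hx ▸ hbot⟩
  by_contra hne
  have := h.strictMono (bot_lt_iff_ne_bot.2 hne)
  omega

end IsLocallyBoolean

end LocallyBoolean

section Chains

open scoped Finset

open Classical in
/-- The chains of `Q` whose set of `ρ`-values is exactly `T`. Unlike the chains counted by `flagF`,
they may contain a minimum of `Q`. -/
noncomputable def flagChains {Q : Type*} [Fintype Q] [PartialOrder Q] (ρ : Q → ℕ) (T : Finset ℕ) :
    Finset (Finset Q) :=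
  {c | IsChain (· ≤ ·) (c : Set Q) ∧ c.image ρ = T}

open Classical in
/-- The number of chains with rank set `T` that end at the top element, in the boolean lattice of
rank `t`. -/
noncomputable def boolFlagCount (t : ℕ) (T : Finset ℕ) : ℕ :=
  #((flagChains (Finset.card : Finset (Fin t) → ℕ) T).filter fun c : Finset (Finset (Fin t)) =>
    IsGreatest (c : Set (Finset (Fin t))) Finset.univ)

variable {Q : Type*} [Fintype Q] [PartialOrder Q] {ρ : Q → ℕ} {T : Finset ℕ} {c : Finset Q}

theorem mem_flagChains :
    c ∈ flagChains ρ T ↔ IsChain (· ≤ ·) (c : Set Q) ∧ c.image ρ = T := by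
  simp [flagChains]

theorem map_mem_flagChains {A : Type*} [Fintype A] [PartialOrder A] {σ : A → ℕ} {φ : A ↪o Q}
    (hφ : ∀ a, ρ (φ a) = σ a) {c : Finset A} :
    c.map φ.toEmbedding ∈ flagChains ρ T ↔ c ∈ flagChains σ T := by
  classical
  rw [mem_flagChains, mem_flagChains, Finset.coe_map, Finset.map_eq_image, Finset.image_image]
  have hρφ : ρ ∘ φ = σ := funext hφ
  exact and_congr IsChain.image_relEmbedding_iff (by rw [← hρφ]; rfl)

theorem isGreatest_iff_of_mem_flagChains (hρ : StrictMono ρ) (hc : c ∈ flagChains ρ T) {t : ℕ}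
    (ht : IsGreatest (T : Set ℕ) t) {x : Q} : IsGreatest (c : Set Q) x ↔ x ∈ c ∧ ρ x = t := by
  obtain ⟨hchain, rfl⟩ := mem_flagChains.1 hc
  constructor
  · rintro ⟨hx, hmax⟩
    obtain ⟨y, hy, rfl⟩ := Finset.mem_image.1 ht.1
    exact ⟨hx, le_antisymm (ht.2 (Finset.mem_image_of_mem ρ hx)) (hρ.monotone (hmax hy))⟩
  · rintro ⟨hx, rfl⟩
    refine ⟨hx, fun y hy => (hchain.total hy hx).elim id fun hxy => ?_⟩
    exact (hxy.eq_of_not_lt fun hlt =>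
      (hρ hlt).not_ge (ht.2 (Finset.mem_image_of_mem ρ hy))).ge

namespace IsLocallyBoolean

open Classical in
theorem card_flagChains_isGreatest (hρ : IsLocallyBoolean ρ) (x : Q) (T : Finset ℕ) :
    #((flagChains ρ T).filter fun c : Finset Q => IsGreatest (c : Set Q) x) =
      boolFlagCount (ρ x) T := by
  obtain ⟨φ, hrange, htop, hcard⟩ := hρ.exists_orderEmbedding x
  rw [boolFlagCount, ← Finset.card_map (Finset.mapEmbedding φ.toEmbedding).toEmbedding]
  congr 1
  ext c
  have hmem (d : Finset (Finset (Fin (ρ x)))) :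
      d.map φ.toEmbedding ∈ flagChains ρ T ∧ IsGreatest (d.map φ.toEmbedding : Set Q) x ↔
        d ∈ flagChains Finset.card T ∧ IsGreatest (d : Set (Finset (Fin (ρ x)))) Finset.univ := by
    have hgreatest : IsGreatest (d.map φ.toEmbedding : Set Q) (φ Finset.univ) ↔
        IsGreatest (d : Set (Finset (Fin (ρ x)))) Finset.univ := by
      simp [IsGreatest, mem_upperBounds]
    rw [htop] at hgreatest
    exact and_congr (map_mem_flagChains hcard) hgreatest
  simp only [Finset.mem_filter, Finset.mem_map, RelEmbedding.coe_toEmbedding,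
    Finset.mapEmbedding_apply]
  constructor
  · intro hc
    have hsub : (c : Set Q) ⊆ φ '' Set.univ := by
      rw [Set.image_univ, hrange]
      exact hc.2.2
    obtain ⟨d, -, rfl⟩ := Finset.subset_set_image_iff.1 hsub
    have hd : d.image φ = d.map φ.toEmbedding := (Finset.map_eq_image _ _).symm
    rw [hd] at hc ⊢
    exact ⟨d, (hmem d).1 hc, rfl⟩
  · rintro ⟨d, hd, rfl⟩
    exact (hmem d).2 hd

open Classical in
theorem card_flagChains_exists (hρ : IsLocallyBoolean ρ) {t : ℕ} (ht : IsGreatest (T : Set ℕ) t)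
    (p : Q → Prop) :
    #((flagChains ρ T).filter fun c => ∃ x ∈ c, ρ x = t ∧ p x) =
      #{x | ρ x = t ∧ p x} * boolFlagCount t T := by
  have hunion : ((flagChains ρ T).filter fun c => ∃ x ∈ c, ρ x = t ∧ p x) =
      ({x | ρ x = t ∧ p x} : Finset Q).biUnion fun x =>
        (flagChains ρ T).filter fun c : Finset Q => IsGreatest (c : Set Q) x := by
    ext c
    simp only [Finset.mem_filter, Finset.mem_biUnion, Finset.mem_univ, true_and]
    constructor
    · rintro ⟨hc, x, hxc, hx⟩
      exact ⟨x, hx, hc, (isGreatest_iff_of_mem_flagChains hρ.strictMono hc ht).2 ⟨hxc, hx.1⟩⟩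
    · rintro ⟨x, hx, hc, hxc⟩
      exact ⟨hc, x, hxc.1, hx⟩
  rw [hunion, Finset.card_biUnion, Finset.sum_const_nat]
  · intro x hx
    rw [hρ.card_flagChains_isGreatest, (Finset.mem_filter.1 hx).2.1]
  · intro x _ y _ hxy
    exact Finset.disjoint_filter.2 fun c _ hx hy => hxy (hx.unique hy)

theorem flagF_eq_card_flagChains [OrderBot Q] (hρ : IsLocallyBoolean ρ) (hT : 0 ∉ T) :
    flagF ρ T = #(flagChains ρ (insert 0 T)) := by
  classical
  rw [flagF, Nat.card_eq_fintype_card, Fintype.card_subtype]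
  have hbot : ρ ⊥ = 0 := hρ.apply_eq_zero_iff.2 rfl
  refine Finset.card_nbij' (insert ⊥) (Finset.erase · ⊥) ?_ ?_ ?_ ?_
  · intro c hc
    obtain ⟨hchain, -, rfl⟩ := (Finset.mem_filter.1 hc).2
    rw [Finset.mem_coe, mem_flagChains, Finset.coe_insert, Finset.image_insert, hbot]
    exact ⟨hchain.insert fun _ _ _ => Or.inl bot_le, rfl⟩
  · intro c hc
    obtain ⟨hchain, himage⟩ := mem_flagChains.1 hc
    rw [Finset.mem_coe, Finset.mem_filter_univ]
    refine ⟨hchain.mono (Finset.erase_subset _ _), Finset.notMem_erase _ _, ?_⟩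
    rw [← Finset.erase_insert hT, ← himage]
    ext i
    simp only [Finset.mem_image, Finset.mem_erase, ← hρ.apply_eq_zero_iff.not]
    grind
  · intro c hc
    exact Finset.erase_insert (Finset.mem_filter.1 hc).2.2.1
  · intro c hc
    refine Finset.insert_erase ?_
    obtain ⟨x, hx, hx0⟩ :=
      Finset.mem_image.1 ((mem_flagChains.1 hc).2 ▸ Finset.mem_insert_self 0 T)
    rwa [← hρ.apply_eq_zero_iff.1 hx0]

/-- Adjoining the minimum makes the rank set nonempty, so that every chain has a greatest
element. -/
theorem flagF_eq_fvec_mul_boolFlagCount [OrderBot Q] (hρ : IsLocallyBoolean ρ) (hT : 0 ∉ T)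
    {t : ℕ} (ht : IsGreatest (insert 0 T : Set ℕ) t) :
    flagF ρ T = fvec ρ t * boolFlagCount t (insert 0 T) := by
  classical
  rw [← Finset.coe_insert] at ht
  have hcount := hρ.card_flagChains_exists ht fun _ => True
  simp only [and_true] at hcount
  rw [hρ.flagF_eq_card_flagChains hT, fvec, ← hcount, Finset.filter_true_of_mem]
  intro c hc
  rw [← Finset.mem_image, (mem_flagChains.1 hc).2]
  exact ht.1

end IsLocallyBoolean

end Chains

section Permutations

open scoped Finset

variable {n : ℕ}

theorem succ_mem_desSet {w : Equiv.Perm (Fin (n + 1))} {i : Fin n} :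
    i.val + 1 ∈ desSet w ↔ w i.succ < w i.castSucc := by
  simp [desSet, Fin.val_inj]

theorem desSet_subset_Icc (w : Equiv.Perm (Fin (n + 1))) : desSet w ⊆ Finset.Icc 1 n := by
  intro d hd
  obtain ⟨i, -, rfl⟩ := Finset.mem_image.1 hd
  exact Finset.mem_Icc.2 ⟨Nat.le_add_left 1 i, i.isLt⟩

theorem apply_lt_apply_of_forall_mem_desSet {w : Equiv.Perm (Fin (n + 1))} {i j : Fin (n + 1)}
    (hij : i < j) (h : ∀ d ∈ desSet w, i.val < d → j.val < d) : w i < w j := by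
  induction j using Fin.induction with
  | zero => exact absurd hij (Fin.not_lt_zero i)
  | succ j ih =>
    have hstep : w j.castSucc < w j.succ := by
      by_contra hle
      have hne : w j.succ ≠ w j.castSucc := w.injective.ne j.castSucc_lt_succ.ne'
      have := h _ (succ_mem_desSet.2 ((not_lt.1 hle).lt_of_ne hne)) hij
      simp at this
    rcases (Fin.le_castSucc_iff.2 hij).eq_or_lt with rfl | hlt
    · exact hstep
    · refine (ih hlt fun d hd hid => ?_).trans hstep
      have := h d hd hid
      rw [Fin.val_succ] at this
      exact Nat.lt_of_succ_lt this

/-- The set of values taken by `w` on its last `t` positions. -/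
def lastValues (w : Equiv.Perm (Fin (n + 1))) (t : ℕ) : Finset (Fin (n + 1)) :=
  {j | n + 1 ≤ (w.symm j : ℕ) + t}

theorem mem_lastValues {w : Equiv.Perm (Fin (n + 1))} {t : ℕ} {j : Fin (n + 1)} :
    j ∈ lastValues w t ↔ n + 1 ≤ (w.symm j : ℕ) + t :=
  Finset.mem_filter_univ _

theorem apply_mem_lastValues {w : Equiv.Perm (Fin (n + 1))} {t : ℕ} {i : Fin (n + 1)} :
    w i ∈ lastValues w t ↔ n + 1 ≤ (i : ℕ) + t := by
  rw [mem_lastValues, Equiv.symm_apply_apply]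

theorem lastValues_mono (w : Equiv.Perm (Fin (n + 1))) : Monotone (lastValues w) := by
  intro s t hst j
  simp only [mem_lastValues]
  omega

theorem card_lastValues (w : Equiv.Perm (Fin (n + 1))) {t : ℕ} (ht : t ≤ n + 1) :
    #(lastValues w t) = t := by
  have hmap : (lastValues w t).map (w.symm.toEmbedding.trans Fin.valEmbedding) =
      Finset.Ico (n + 1 - t) (n + 1) := by
    ext i
    simp only [Finset.mem_map, mem_lastValues, Finset.mem_Ico]
    constructor
    · rintro ⟨j, hj, rfl⟩
      simp
      omega
    · rintro ⟨hi, hin⟩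
      exact ⟨w ⟨i, hin⟩, by simp; omega, by simp⟩
  rw [← Finset.card_map, hmap, Nat.card_Ico]
  omega

theorem image_lastValues_mem_flagChains (w : Equiv.Perm (Fin (n + 1))) {T : Finset ℕ}
    (hT : ∀ t ∈ T, t ≤ n + 1) : T.image (lastValues w) ∈ flagChains Finset.card T := by
  rw [mem_flagChains, Finset.coe_image, Finset.image_image]
  refine ⟨(lastValues_mono w).isChain_range.mono (Set.image_subset_range _ _), ?_⟩
  exact (Finset.image_congr fun t ht => card_lastValues w (hT t ht)).trans Finset.image_id

theorem mem_iff_le_add_card_of_isUpperSet {m : ℕ} {U : Finset (Fin m)}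
    (hU : IsUpperSet (U : Set (Fin m))) {i : Fin m} : i ∈ U ↔ m ≤ i + #U := by
  constructor
  · intro hi
    have hsub : Finset.Ici i ⊆ U := fun j hj => hU (Finset.mem_Ici.1 hj) hi
    have := Finset.card_le_card hsub
    rw [Fin.card_Ici] at this
    omega
  · intro h
    by_contra hi
    have hsub : U ⊆ Finset.Ioi i := fun j hj =>
      Finset.mem_Ioi.2 (lt_of_not_ge fun hji => hi (hU hji hj))
    have := Finset.card_le_card hsub
    rw [Fin.card_Ioi] at this
    omega

section MemberCount

variable {α : Type*} [DecidableEq α]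

/-- The number of members of the family `c` that contain `j`. -/
def memberCount (c : Finset (Finset α)) (j : α) : ℕ := #(c.filter (j ∈ ·))

theorem memberCount_le_memberCount {c : Finset (Finset α)} {i j : α}
    (h : ∀ C ∈ c, i ∈ C → j ∈ C) : memberCount c i ≤ memberCount c j := by
  refine Finset.card_le_card fun C hC => ?_
  rw [Finset.mem_filter] at hC ⊢
  exact ⟨hC.1, h C hC.1 hC.2⟩

theorem memberCount_lt_memberCount {c : Finset (Finset α)}
    (hc : IsChain (· ≤ ·) (c : Set (Finset α))) {C : Finset α} (hC : C ∈ c) {i j : α}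
    (hi : i ∉ C) (hj : j ∈ C) : memberCount c i < memberCount c j := by
  have hsub : c.filter (i ∈ ·) ⊆ c.filter (j ∈ ·) := by
    intro D hD
    rw [Finset.mem_filter] at hD ⊢
    exact ⟨hD.1, (hc.total hC hD.1).elim (· hj) fun hDC => absurd (hDC hD.2) hi⟩
  refine Finset.card_lt_card ((Finset.ssubset_iff_of_subset hsub).2 ⟨C, ?_, ?_⟩)
  · exact Finset.mem_filter.2 ⟨hC, hj⟩
  · exact fun h => hi (Finset.mem_filter.1 h).2

end MemberCount

/-- The permutation listing the elements by increasing number of members of the chain `c` that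
contain them, and increasingly among elements contained in equally many members. -/
def chainPerm (c : Finset (Finset (Fin (n + 1)))) : Equiv.Perm (Fin (n + 1)) :=
  Tuple.sort (memberCount c)

variable {c : Finset (Finset (Fin (n + 1)))}

theorem memberCount_chainPerm_monotone :
    Monotone fun i => memberCount c (chainPerm c i) :=
  Tuple.monotone_sort (memberCount c)

theorem chainPerm_lt_chainPerm {i j : Fin (n + 1)} (hij : i < j)
    (h : memberCount c (chainPerm c i) = memberCount c (chainPerm c j)) :
    chainPerm c i < chainPerm c j :=
  (Tuple.eq_sort_iff.1 rfl).2 i j hij h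

theorem lastValues_chainPerm (hc : IsChain (· ≤ ·) (c : Set (Finset (Fin (n + 1)))))
    {C : Finset (Fin (n + 1))} (hC : C ∈ c) : lastValues (chainPerm c) #C = C := by
  have hupper : IsUpperSet (C.map (chainPerm c).symm.toEmbedding : Set (Fin (n + 1))) := by
    intro i i' hii' hi
    rw [Finset.mem_coe, Finset.mem_map_equiv, Equiv.symm_symm] at hi ⊢
    by_contra hi'
    exact (memberCount_lt_memberCount hc hC hi' hi).not_ge (memberCount_chainPerm_monotone hii')
  ext j
  rw [mem_lastValues, ← Finset.card_map (chainPerm c).symm.toEmbedding,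
    ← mem_iff_le_add_card_of_isUpperSet hupper, Finset.mem_map_equiv, Equiv.symm_symm,
    Equiv.apply_symm_apply]

theorem revSet_desSet_chainPerm_subset
    (hc : IsChain (· ≤ ·) (c : Set (Finset (Fin (n + 1))))) :
    revSet n (desSet (chainPerm c)) ⊆ c.image Finset.card := by
  intro d hd
  obtain ⟨_, he, rfl⟩ := Finset.mem_image.1 hd
  obtain ⟨i, -, rfl⟩ := Finset.mem_image.1 he
  have hdes := succ_mem_desSet.1 he
  have hlt : memberCount c (chainPerm c i.castSucc) < memberCount c (chainPerm c i.succ) :=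
    (memberCount_chainPerm_monotone i.castSucc_lt_succ.le).lt_of_ne fun h =>
      hdes.not_gt (chainPerm_lt_chainPerm i.castSucc_lt_succ h)
  obtain ⟨C, hC, hmem, hnotMem⟩ :
      ∃ C ∈ c, chainPerm c i.succ ∈ C ∧ chainPerm c i.castSucc ∉ C := by
    by_contra! hall
    exact hlt.not_ge (memberCount_le_memberCount hall)
  rw [← lastValues_chainPerm hc hC, apply_mem_lastValues] at hmem hnotMem
  rw [Fin.val_succ] at hmem
  rw [Fin.val_castSucc] at hnotMem
  exact Finset.mem_image.2 ⟨C, hC, by omega⟩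

theorem chainPerm_image_lastValues {w : Equiv.Perm (Fin (n + 1))} {T : Finset ℕ}
    (hT : revSet n (desSet w) ⊆ T) : chainPerm (T.image (lastValues w)) = w := by
  have hchain : IsChain (· ≤ ·) (T.image (lastValues w) : Set (Finset (Fin (n + 1)))) := by
    rw [Finset.coe_image]
    exact (lastValues_mono w).isChain_range.mono (Set.image_subset_range _ _)
  refine (Tuple.eq_sort_iff.2 ⟨fun i j hij => ?_, fun i j hij hcount => ?_⟩).symm
  · refine memberCount_le_memberCount fun C hC hi => ?_
    obtain ⟨t, -, rfl⟩ := Finset.mem_image.1 hC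
    rw [apply_mem_lastValues] at hi ⊢
    omega
  · refine apply_lt_apply_of_forall_mem_desSet hij fun d hd hid => ?_
    by_contra hjd
    have hdn := (Finset.mem_Icc.1 (desSet_subset_Icc w hd)).2
    have hmem := Finset.mem_image_of_mem (lastValues w) (hT (Finset.mem_image_of_mem _ hd))
    refine (memberCount_lt_memberCount hchain hmem (i := w i) (j := w j) ?_ ?_).ne hcount <;>
      rw [apply_mem_lastValues] <;> omega

theorem isLeast_compl_lastValues {w : Equiv.Perm (Fin (n + 1))} {t : ℕ} (htn : t ≤ n)
    (ht : ∀ s ∈ revSet n (desSet w), s ≤ t) :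
    IsLeast (lastValues w t : Set (Fin (n + 1)))ᶜ (w 0) := by
  constructor
  · rw [Set.mem_compl_iff, Finset.mem_coe, apply_mem_lastValues, Fin.val_zero]
    omega
  · intro j hj
    obtain ⟨i, rfl⟩ := w.surjective j
    rw [Set.mem_compl_iff, Finset.mem_coe, apply_mem_lastValues] at hj
    rcases (Fin.zero_le i).eq_or_lt with rfl | hi
    · exact le_rfl
    · refine (apply_lt_apply_of_forall_mem_desSet hi fun d hd _ => ?_).le
      have := ht _ (Finset.mem_image_of_mem _ hd)
      omega

open Classical in
theorem card_filter_card_eq_and_isLeast_compl {t : ℕ} (htn : t ≤ n) (k : Fin (n + 1)) :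
    #{C : Finset (Fin (n + 1)) | #C = t ∧ IsLeast ((C : Set (Fin (n + 1)))ᶜ) k} =
      (n - k).choose (n - t) := by
  have hIoi : #(Finset.Ioi k) = n - k := by
    rw [Fin.card_Ioi]
    omega
  rw [← hIoi, ← Finset.card_powersetCard]
  refine Finset.card_nbij' (fun C => Cᶜ.erase k) (fun E => (insert k E)ᶜ) ?_ ?_ ?_ ?_
  · intro C hC
    obtain ⟨hcard, hk, hleast⟩ := (Finset.mem_filter.1 hC).2
    rw [← Finset.coe_compl] at hk hleast
    refine Finset.mem_powersetCard.2 ⟨fun j hj => ?_, ?_⟩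
    · obtain ⟨hjk, hjC⟩ := Finset.mem_erase.1 hj
      exact Finset.mem_Ioi.2 ((hleast hjC).lt_of_ne hjk.symm)
    · rw [Finset.card_erase_of_mem hk, Finset.card_compl, hcard, Fintype.card_fin]
      omega
  · intro E hE
    obtain ⟨hsub, hcard⟩ := Finset.mem_powersetCard.1 hE
    have hk : k ∉ E := fun hk => (Finset.mem_Ioi.1 (hsub hk)).false
    rw [Finset.mem_coe, Finset.mem_filter_univ, Finset.card_compl, Fintype.card_fin,
      Finset.card_insert_of_notMem hk, hcard, ← Finset.coe_compl, compl_compl]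
    refine ⟨by omega, Finset.mem_insert_self k E, fun j hj => ?_⟩
    exact (Finset.mem_insert.1 hj).elim (fun h => h.ge) fun h => (Finset.mem_Ioi.1 (hsub h)).le
  · intro C hC
    have hk : k ∈ Cᶜ := Finset.mem_compl.2 (Finset.mem_filter.1 hC).2.2.1
    exact (congrArg _ (Finset.insert_erase hk)).trans (compl_compl C)
  · intro E hE
    have hk : k ∉ E := fun hk => (Finset.mem_Ioi.1 ((Finset.mem_powersetCard.1 hE).1 hk)).false
    exact (congrArg (Finset.erase · k) (compl_compl _)).trans (Finset.erase_insert hk)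

open Classical in
theorem card_perm_revSet_desSet_subset {T : Finset ℕ} {t : ℕ} (htn : t ≤ n)
    (ht : IsGreatest (T : Set ℕ) t) (k : Fin (n + 1)) :
    #{w : Equiv.Perm (Fin (n + 1)) | w 0 = k ∧ revSet n (desSet w) ⊆ T} =
      (n - k).choose (n - t) * boolFlagCount t T := by
  rw [← card_filter_card_eq_and_isLeast_compl htn k,
    ← (isLocallyBoolean_card (Fin (n + 1))).card_flagChains_exists ht]
  have hT : ∀ s ∈ T, s ≤ n + 1 := fun s hs => (ht.2 hs).trans (Nat.le_succ_of_le htn)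
  have hrev {w : Equiv.Perm (Fin (n + 1))} (hw : revSet n (desSet w) ⊆ T) :
      IsLeast (lastValues w t : Set (Fin (n + 1)))ᶜ (w 0) :=
    isLeast_compl_lastValues htn fun s hs => ht.2 (hw hs)
  refine Finset.card_nbij' (fun w => T.image (lastValues w)) chainPerm ?_ ?_ ?_ ?_
  · intro w hw
    obtain ⟨rfl, hdes⟩ := (Finset.mem_filter.1 hw).2
    exact Finset.mem_filter.2 ⟨image_lastValues_mem_flagChains w hT, _,
      Finset.mem_image_of_mem _ ht.1, card_lastValues w (hT t ht.1), hrev hdes⟩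
  · intro c hc
    obtain ⟨hflag, C, hC, rfl, hk⟩ := Finset.mem_filter.1 hc
    obtain ⟨hchain, rfl⟩ := mem_flagChains.1 hflag
    have hsub := revSet_desSet_chainPerm_subset hchain
    have hleast := hrev hsub
    rw [lastValues_chainPerm hchain hC] at hleast
    exact Finset.mem_filter.2 ⟨Finset.mem_univ _, hleast.unique hk, hsub⟩
  · exact fun w hw => chainPerm_image_lastValues (Finset.mem_filter.1 hw).2.2
  · intro c hc
    obtain ⟨hchain, rfl⟩ := mem_flagChains.1 (Finset.mem_filter.1 hc).1
    refine Finset.image_image.trans ?_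
    exact (Finset.image_congr fun C hC => lastValues_chainPerm hchain hC).trans Finset.image_id

end Permutations

section FlagHVector

open scoped Finset

theorem le_of_isGreatest_insert_zero {n t : ℕ} {T : Finset ℕ} (hT : T ⊆ Finset.Icc 1 n)
    (ht : IsGreatest (insert 0 T : Set ℕ) t) : t ≤ n := by
  rcases ht.1 with rfl | htT
  · exact n.zero_le
  · exact (Finset.mem_Icc.1 (hT htT)).2

/-- The number of permutations of `{1, …, n + 1}` with first value `k + 1` and descent set `U`. -/
def desCount (n k : ℕ) (U : Finset ℕ) : ℕ :=
  #{w : Equiv.Perm (Fin (n + 1)) | (w 0 : ℕ) = k ∧ desSet w = U}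

theorem sum_powerset_desCount_revSet {n k t : ℕ} (hk : k ≤ n) {T : Finset ℕ}
    (hT : T ⊆ Finset.Icc 1 n) (ht : IsGreatest (insert 0 T : Set ℕ) t) :
    ∑ U ∈ T.powerset, desCount n k (revSet n U) =
      (n - k).choose (n - t) * boolFlagCount t (insert 0 T) := by
  have htn := le_of_isGreatest_insert_zero hT ht
  have hsub (w : Equiv.Perm (Fin (n + 1))) :
      revSet n (desSet w) ⊆ insert 0 T ↔ revSet n (desSet w) ⊆ T := by
    refine Finset.subset_insert_iff_of_notMem fun h0 => ?_
    have := Finset.mem_Icc.1 (revSet_subset_Icc (desSet_subset_Icc w) h0)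
    omega
  rw [← Finset.coe_insert] at ht
  rw [← card_perm_revSet_desSet_subset htn ht ⟨k, Nat.lt_succ_of_le hk⟩,
    Finset.card_eq_sum_card_fiberwise (f := fun w => revSet n (desSet w)) (t := T.powerset)]
  · refine Finset.sum_congr rfl fun U hU => ?_
    have hUT := Finset.mem_powerset.1 hU
    rw [desCount, Finset.filter_filter]
    congr 1
    ext w
    simp only [Finset.mem_filter_univ, Fin.ext_iff]
    constructor
    · rintro ⟨hw, hdes⟩
      rw [hdes, revSet_revSet (hUT.trans hT)]
      exact ⟨⟨hw, hUT.trans (Finset.subset_insert 0 T)⟩, rfl⟩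
    · rintro ⟨⟨hw, -⟩, rfl⟩
      exact ⟨hw, (revSet_revSet (desSet_subset_Icc w)).symm⟩
  · intro w hw
    exact Finset.mem_powerset.2 ((hsub w).1 (Finset.mem_filter.1 hw).2.2)

theorem pPoly_empty_eq_sum_desCount (n k : ℕ) (I : Finset ℕ) :
    pPoly n k ∅ I =
      ∑ S ∈ I.powerset.filter IsolatedSet, (desCount n k S : ℝ) • X ^ S.card := by
  have hmaps : ∀ w ∈ Finset.univ.filter (fun w : Equiv.Perm (Fin (n + 1)) =>
      (w 0 : ℕ) = k ∧ IsolatedSet (desSet w) ∧ ∅ ⊆ desSet w ∧ desSet w ⊆ I),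
      desSet w ∈ I.powerset.filter IsolatedSet := by
    intro w hw
    obtain ⟨-, hiso, -, hsub⟩ := (Finset.mem_filter.1 hw).2
    exact Finset.mem_filter.2 ⟨Finset.mem_powerset.2 hsub, hiso⟩
  rw [pPoly, ← Finset.sum_fiberwise_of_maps_to hmaps]
  refine Finset.sum_congr rfl fun S hS => ?_
  rw [Finset.mem_filter, Finset.mem_powerset] at hS
  rw [Finset.filter_filter, Finset.sum_congr rfl fun w hw => by rw [(Finset.mem_filter.1 hw).2.2],
    Finset.sum_const, desCount, Nat.cast_smul_eq_nsmul]
  congr 2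
  ext w
  simp only [Finset.mem_filter_univ]
  constructor
  · exact fun h => ⟨h.1.1, h.2⟩
  · rintro ⟨hk, rfl⟩
    exact ⟨⟨hk, hS.2, Finset.empty_subset _, hS.1⟩, rfl⟩

variable {P : Type*} [Fintype P] [PartialOrder P] [OrderBot P] {rk : P → ℕ} {n : ℕ}

namespace IsLocallyBoolean

theorem flagF_eq_sum_powerset (hrk : IsLocallyBoolean rk) {T : Finset ℕ}
    (hT : T ⊆ Finset.Icc 1 n) :
    (flagF rk T : ℤ) = ∑ U ∈ T.powerset,
      ∑ k ∈ Finset.range (n + 1), hvec rk n k * (desCount n k (revSet n U) : ℤ) := by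
  obtain ⟨t, ht⟩ : ∃ t, IsGreatest (insert 0 T : Set ℕ) t := by
    rw [← Finset.coe_insert]
    exact ⟨_, Finset.isGreatest_max' _ (Finset.insert_nonempty 0 T)⟩
  have h0 : 0 ∉ T := fun h => absurd (Finset.mem_Icc.1 (hT h)).1 (by omega)
  rw [hrk.flagF_eq_fvec_mul_boolFlagCount h0 ht, Nat.cast_mul,
    fvec_eq_sum_hvec_mul_choose rk (le_of_isGreatest_insert_zero hT ht),
    Finset.sum_mul, Finset.sum_comm]
  refine Finset.sum_congr rfl fun k hk => ?_
  rw [← Finset.mul_sum, mul_assoc]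
  exact_mod_cast congrArg (hvec rk n k * (Nat.cast : ℕ → ℤ) ·)
    (sum_powerset_desCount_revSet (Finset.mem_range_succ_iff.1 hk) hT ht).symm

theorem flagH_eq_sum_hvec_mul_desCount (hrk : IsLocallyBoolean rk) {S : Finset ℕ}
    (hS : S ⊆ Finset.Icc 1 n) :
    flagH rk S = ∑ k ∈ Finset.range (n + 1), hvec rk n k * (desCount n k (revSet n S) : ℤ) :=
  sum_powerset_neg_one_pow_card_sdiff fun _ hT => hrk.flagF_eq_sum_powerset (hT.trans hS)

theorem sum_flagHDual_smul_X_pow (hrk : IsLocallyBoolean rk) {I : Finset ℕ}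
    (hI : I ⊆ Finset.Icc 1 n) :
    ∑ S ∈ I.powerset.filter IsolatedSet, (flagHDual rk n S : ℝ) • (X : ℝ[X]) ^ S.card =
      ∑ k ∈ Finset.range (n + 1), (hvec rk n k : ℝ) • pPoly n k ∅ I := by
  simp only [pPoly_empty_eq_sum_desCount, Finset.smul_sum, smul_smul]
  rw [Finset.sum_comm]
  refine Finset.sum_congr rfl fun S hS => ?_
  have hSn := (Finset.mem_powerset.1 (Finset.mem_filter.1 hS).1).trans hI
  have hdual : flagHDual rk n S =
      ∑ k ∈ Finset.range (n + 1), hvec rk n k * (desCount n k S : ℤ) := by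
    have hrev := hrk.flagH_eq_sum_hvec_mul_desCount (revSet_subset_Icc hSn)
    rwa [revSet_revSet hSn] at hrev
  rw [hdual, ← Finset.sum_smul]
  push_cast
  rfl

theorem sum_flagH_smul_X_pow (hrk : IsLocallyBoolean rk) {I : Finset ℕ}
    (hI : I ⊆ Finset.Icc 1 n) :
    ∑ S ∈ I.powerset.filter IsolatedSet, (flagH rk S : ℝ) • (X : ℝ[X]) ^ S.card =
      ∑ k ∈ Finset.range (n + 1), (hvec rk n k : ℝ) • pPoly n k ∅ (revSet n I) := by
  rw [← hrk.sum_flagHDual_smul_X_pow (revSet_subset_Icc hI), ← sum_isolatedSet_revSet hI]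
  refine Finset.sum_congr rfl fun S hS => ?_
  have hSI := Finset.mem_powerset.1 (Finset.mem_filter.1 hS).1
  rw [card_revSet (hSI.trans (revSet_subset_Icc hI))]
  rfl

end IsLocallyBoolean

end FlagHVector

theorem statement16_general {P : Type*} [Fintype P] [PartialOrder P] [OrderBot P]
    (n : ℕ) (rk : P → ℕ) (hrk : IsLocallyBoolean rk)
    (γ₁ γ₂ γ₃ γ₄ : ℕ → ℝ)
    (h1 : chowPoly rk n = ∑ i ∈ Finset.range (n / 2 + 1),
        Polynomial.C (γ₁ i) * Polynomial.X ^ i * (1 + Polynomial.X) ^ (n - 2 * i))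
    (h2 : chowDualPoly rk n = ∑ i ∈ Finset.range (n / 2 + 1),
        Polynomial.C (γ₂ i) * Polynomial.X ^ i * (1 + Polynomial.X) ^ (n - 2 * i))
    (h3 : chowAugPoly rk n = ∑ i ∈ Finset.range ((n + 1) / 2 + 1),
        Polynomial.C (γ₃ i) * Polynomial.X ^ i * (1 + Polynomial.X) ^ (n + 1 - 2 * i))
    (h4 : chowAugDualPoly rk n = ∑ i ∈ Finset.range ((n + 1) / 2 + 1),
        Polynomial.C (γ₄ i) * Polynomial.X ^ i * (1 + Polynomial.X) ^ (n + 1 - 2 * i)) :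
    ((∑ i ∈ Finset.range (n / 2 + 1), Polynomial.C (γ₁ i) * Polynomial.X ^ i)
        = ∑ k ∈ Finset.range (n + 1), (hvec rk n k : ℝ) • pPoly n k ∅ (Finset.Icc 1 (n - 1))) ∧
    ((∑ i ∈ Finset.range (n / 2 + 1), Polynomial.C (γ₂ i) * Polynomial.X ^ i)
        = ∑ k ∈ Finset.range (n + 1), (hvec rk n k : ℝ) • pPoly n k ∅ (Finset.Icc 2 n)) ∧
    ((∑ i ∈ Finset.range ((n + 1) / 2 + 1), Polynomial.C (γ₃ i) * Polynomial.X ^ i)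
        = ∑ k ∈ Finset.range (n + 1), (hvec rk n k : ℝ) • pPoly n k ∅ (Finset.Icc 1 n)) ∧
    ((∑ i ∈ Finset.range ((n + 1) / 2 + 1), Polynomial.C (γ₄ i) * Polynomial.X ^ i)
        = ∑ k ∈ Finset.range (n + 1), (hvec rk n k : ℝ) • pPoly n k ∅ (Finset.Icc 1 n)) := by
  have h2n : Finset.Icc 2 n ⊆ Finset.Icc 1 n := Finset.Icc_subset_Icc_left one_le_two
  have hrev (a : ℕ) (ha : 1 ≤ a) :
      revSet n (Finset.Icc a n) = Finset.Icc 1 (n + 1 - a) := by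
    rw [revSet_Icc ha le_rfl, Nat.add_sub_cancel_left]
  refine ⟨?_, ?_, ?_, ?_⟩
  · rw [sum_C_mul_X_pow_eq_sum_isolatedSet (by omega) h1, hrk.sum_flagH_smul_X_pow h2n,
      hrev 2 one_le_two, Nat.add_sub_add_right n 1 1]
  · rw [sum_C_mul_X_pow_eq_sum_isolatedSet (by omega) h2, hrk.sum_flagHDual_smul_X_pow h2n]
  · rw [sum_C_mul_X_pow_eq_sum_isolatedSet (by omega) h3, hrk.sum_flagH_smul_X_pow le_rfl,
      hrev 1 le_rfl, Nat.add_sub_cancel]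
  · rw [sum_C_mul_X_pow_eq_sum_isolatedSet (by omega) h4, hrk.sum_flagHDual_smul_X_pow le_rfl]

theorem statement16 {P : Type*} [Fintype P] [PartialOrder P] [OrderBot P]
    (n : ℕ) (hn : 2 ≤ n) (rk : P → ℕ)
    (hrk : IsRankFunction rk)
    (hsimp : SimplicialOfRank P n)
    (γ₁ γ₂ γ₃ γ₄ : ℕ → ℝ)
    (h1 : chowPoly rk n = ∑ i ∈ Finset.range (n / 2 + 1),
        Polynomial.C (γ₁ i) * Polynomial.X ^ i * (1 + Polynomial.X) ^ (n - 2 * i))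
    (h2 : chowDualPoly rk n = ∑ i ∈ Finset.range (n / 2 + 1),
        Polynomial.C (γ₂ i) * Polynomial.X ^ i * (1 + Polynomial.X) ^ (n - 2 * i))
    (h3 : chowAugPoly rk n = ∑ i ∈ Finset.range ((n + 1) / 2 + 1),
        Polynomial.C (γ₃ i) * Polynomial.X ^ i * (1 + Polynomial.X) ^ (n + 1 - 2 * i))
    (h4 : chowAugDualPoly rk n = ∑ i ∈ Finset.range ((n + 1) / 2 + 1),
        Polynomial.C (γ₄ i) * Polynomial.X ^ i * (1 + Polynomial.X) ^ (n + 1 - 2 * i)) :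
    ((∑ i ∈ Finset.range (n / 2 + 1), Polynomial.C (γ₁ i) * Polynomial.X ^ i)
        = ∑ k ∈ Finset.range (n + 1), (hvec rk n k : ℝ) • pPoly n k ∅ (Finset.Icc 1 (n - 1))) ∧
    ((∑ i ∈ Finset.range (n / 2 + 1), Polynomial.C (γ₂ i) * Polynomial.X ^ i)
        = ∑ k ∈ Finset.range (n + 1), (hvec rk n k : ℝ) • pPoly n k ∅ (Finset.Icc 2 n)) ∧
    ((∑ i ∈ Finset.range ((n + 1) / 2 + 1), Polynomial.C (γ₃ i) * Polynomial.X ^ i)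
        = ∑ k ∈ Finset.range (n + 1), (hvec rk n k : ℝ) • pPoly n k ∅ (Finset.Icc 1 n)) ∧
    ((∑ i ∈ Finset.range ((n + 1) / 2 + 1), Polynomial.C (γ₄ i) * Polynomial.X ^ i)
        = ∑ k ∈ Finset.range (n + 1), (hvec rk n k : ℝ) • pPoly n k ∅ (Finset.Icc 1 n)) := by
  exact statement16_general n rk (hsimp.isLocallyBoolean hrk) γ₁ γ₂ γ₃ γ₄ h1 h2 h3 h4
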